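/- arXiv:1001.3929 — 6 statements merged into one kernel-verified Lean document; each statement's English description precedes it below -/
import Mathlib

section
/- Let I be a finite set with |I| = n ≥ 3. In ℝ^I with standard basis (e_i)_{i∈I}, set h = −∑_{i∈I} e_i and f_i = h + e_i for each i ∈ I. Let I₁, I₂ ⊆ I with I₁ ∪ I₂ ≠ I. Then the dimension of the linear span of the family {e_i : i ∈ I₁} ∪ {f_i : i ∈ I₂} equals |I₁ ∪ I₂| if I₁ ∩ I₂ = ∅, and equals |I₁ ∪ I₂| + 1 if I₁ ∩ I₂ ≠ ∅. In particular, this family is linearly independent if and only if |I₁ ∩ I₂| ≤ 1. -/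
open scoped BigOperators

/-!
Choose `k ∉ I₁ ∪ I₂`. Since `e_k` occurs in `h = -∑ i, e_i` with coefficient `-1`, replacing `e_k`
by `h` keeps the family `e` independent, so one may argue with an arbitrary independent family `v`
and `f_i = v_k + v_i`. If `I₁` and `I₂` are disjoint, the vectors `v_i` (`i ∈ I₁`) and `v_k + v_i`
(`i ∈ I₂`) arise from `v` by adding multiples of `v_k` to the other members, hence are
independent. If `p ∈ I₁ ∩ I₂`, then `v_k = f_p - v_p` lies in the span, which is therefore spanned
by `v_k` and the `v_i` with `i ∈ I₁ ∪ I₂`.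
-/

open Module Submodule

section Span

variable {R M ι : Type*} [Ring R] [AddCommGroup M] [Module R M]

theorem span_image_union_image_const_add (v : ι → M) (h : M) {s t : Set ι}
    (hst : (s ∩ t).Nonempty) :
    span R (v '' s ∪ (fun i ↦ h + v i) '' t) = span R (insert h (v '' (s ∪ t))) := by
  obtain ⟨p, hps, hpt⟩ := hst
  apply le_antisymm <;> rw [span_le]
  · have mem_h : h ∈ span R (insert h (v '' (s ∪ t))) := mem_span_of_mem (Set.mem_insert _ _)
    have mem_v {i} (hi : i ∈ s ∪ t) : v i ∈ span R (insert h (v '' (s ∪ t))) :=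
      mem_span_of_mem (Set.mem_insert_of_mem _ (Set.mem_image_of_mem v hi))
    rintro _ (⟨i, hi, rfl⟩ | ⟨i, hi, rfl⟩)
    · exact mem_v (.inl hi)
    · exact add_mem mem_h (mem_v (.inr hi))
  · set W := span R (v '' s ∪ (fun i ↦ h + v i) '' t)
    have mem_v {i} (hi : i ∈ s) : v i ∈ W := mem_span_of_mem (.inl ⟨i, hi, rfl⟩)
    have mem_add {i} (hi : i ∈ t) : h + v i ∈ W := mem_span_of_mem (.inr ⟨i, hi, rfl⟩)
    have mem_h : h ∈ W := (W.add_mem_iff_left (mem_v hps)).mp (mem_add hpt)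
    rintro _ (rfl | ⟨i, hi | hi, rfl⟩)
    · exact mem_h
    · exact mem_v hi
    · exact (W.add_mem_iff_right mem_h).mp (mem_add hi)

theorem linearIndependent_update_neg_sum [Fintype ι] [DecidableEq ι] {v : ι → M}
    (hv : LinearIndependent R v) (k : ι) :
    LinearIndependent R (Function.update v k (-∑ i, v i)) := by
  rw [Fintype.linearIndependent_iff] at hv ⊢
  intro a ha
  have coeff_eq_zero : ∀ i, Function.update a k 0 i - a k = 0 := by
    have update_eq (i : ι) : a i • Function.update v k (-∑ j, v j) i =
        Function.update a k 0 i • v i + Pi.single (M := fun _ ↦ M) k (a k • -∑ j, v j) i := by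
      obtain rfl | hik := eq_or_ne i k <;> simp [*]
    refine hv _ ?_
    calc ∑ i, (Function.update a k 0 i - a k) • v i
      _ = ∑ i, Function.update a k 0 i • v i + a k • -∑ i, v i := by
        simp only [sub_smul, Finset.sum_sub_distrib, ← Finset.smul_sum, smul_neg, ← sub_eq_add_neg]
      _ = ∑ i, a i • Function.update v k (-∑ j, v j) i := by
        simp [update_eq, Finset.sum_add_distrib]
      _ = 0 := ha
  have hk : a k = 0 := by simpa using coeff_eq_zero k
  intro i
  obtain rfl | hik := eq_or_ne i k
  · exact hk
  · simpa [hik, hk] using coeff_eq_zero i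

end Span

section Finrank

variable {R M ι : Type*} [Ring R] [Nontrivial R] [AddCommGroup M] [Module R M]

theorem finrank_span_image_finset [StrongRankCondition R] {v : ι → M} {s : Finset ι}
    (hv : LinearIndepOn R v (s : Set ι)) : finrank R (span R (v '' s)) = s.card := by
  rw [Set.image_eq_range]
  simpa using finrank_span_eq_card hv

variable [DecidableEq ι] {v : ι → M} {s t : Finset ι} {k : ι}

theorem finrank_span_image_union_image_const_add_of_disjoint [StrongRankCondition R]
    (hv : LinearIndependent R v) (hk : k ∉ t) (hst : Disjoint s t) :
    finrank R (span R (v '' s ∪ (fun i ↦ v k + v i) '' t)) = (s ∪ t).card := by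
  let c : ι → R := fun i ↦ if i ∈ t then 1 else 0
  let w : ι → M := v + (c · • v k)
  have hw : LinearIndependent R w := 
    (linearIndependent_add_smul_iff (c := c) (if_neg hk)).mpr hv
  have image_s : v '' s = w '' s := Set.image_congr fun i hi ↦ by
    simp [w, c, Finset.disjoint_left.mp hst hi]
  have image_t : (fun i ↦ v k + v i) '' t = w '' t := Set.image_congr fun i hi ↦ by
    simp [w, c, Finset.mem_coe.mp hi, add_comm]
  rw [image_s, image_t, ← Set.image_union, ← Finset.coe_union]
  exact finrank_span_image_finset (hw.linearIndepOn _)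

theorem finrank_span_image_union_image_const_add_of_not_disjoint [StrongRankCondition R]
    (hv : LinearIndependent R v) (hk : k ∉ s ∪ t) (hst : ¬Disjoint s t) :
    finrank R (span R (v '' s ∪ (fun i ↦ v k + v i) '' t)) = (s ∪ t).card + 1 := by
  have inter_nonempty : ((s : Set ι) ∩ t).Nonempty :=
    mod_cast Finset.not_disjoint_iff_nonempty_inter.mp hst
  rw [span_image_union_image_const_add v (v k) inter_nonempty, ← Set.image_insert_eq,
    ← Finset.coe_union, ← Finset.coe_insert, finrank_span_image_finset (hv.linearIndepOn _),
    Finset.card_insert_of_notMem hk]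

theorem finrank_span_image_union_image_const_add [StrongRankCondition R]
    (hv : LinearIndependent R v) (hk : k ∉ s ∪ t) :
    finrank R (span R (v '' s ∪ (fun i ↦ v k + v i) '' t)) =
      if s ∩ t = ∅ then (s ∪ t).card else (s ∪ t).card + 1 := by
  split_ifs with hst <;> rw [← Finset.disjoint_iff_inter_eq_empty] at hst
  · exact finrank_span_image_union_image_const_add_of_disjoint hv
      (Finset.notMem_union.mp hk).2 hst
  · exact finrank_span_image_union_image_const_add_of_not_disjoint hv hk hst

theorem linearIndependent_sumElim_const_add_iff [OrzechProperty R]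
    (hv : LinearIndependent R v) (hk : k ∉ s ∪ t) :
    LinearIndependent R (Sum.elim (fun i : s ↦ v i) (fun j : t ↦ v k + v j)) ↔
      (s ∩ t).card ≤ 1 := by
  have range_eq : Set.range (Sum.elim (fun i : s ↦ v i) (fun j : t ↦ v k + v j)) =
      v '' s ∪ (fun i ↦ v k + v i) '' t := by
    simp [Set.image_eq_range]
  have card_add := Finset.card_union_add_card_inter s t
  rw [linearIndependent_iff_card_eq_finrank_span, range_eq, Set.finrank,
    finrank_span_image_union_image_const_add hv hk, Fintype.card_sum, Fintype.card_coe,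
    Fintype.card_coe]
  split_ifs with hst
  · have := Finset.card_eq_zero.mpr hst
    omega
  · have := Finset.card_pos.mpr (Finset.nonempty_iff_ne_empty.mpr hst)
    omega

theorem stmt_4_general [OrzechProperty R] [Fintype ι] {e : ι → M} (he : LinearIndependent R e)
    {h : M} (hh : h = -∑ i, e i) {f : ι → M} (hf : ∀ i, f i = h + e i)
    {I₁ I₂ : Finset ι} (hI : I₁ ∪ I₂ ≠ Finset.univ) :
    (finrank R (span R ((e '' ↑I₁) ∪ (f '' ↑I₂))) =
      if I₁ ∩ I₂ = ∅ then (I₁ ∪ I₂).card else (I₁ ∪ I₂).card + 1) ∧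
    (LinearIndependent R (Sum.elim (fun i : ↥I₁ => e i) (fun j : ↥I₂ => f j)) ↔
      (I₁ ∩ I₂).card ≤ 1) := by
  obtain ⟨k, hk⟩ : ∃ k, k ∉ I₁ ∪ I₂ := by simpa [Finset.eq_univ_iff_forall] using hI
  let v : ι → M := Function.update e k h
  have hv : LinearIndependent R v := by
    subst hh
    exact linearIndependent_update_neg_sum he k
  have v_k : v k = h := Function.update_self ..
  have v_eq {i} (hi : i ∈ I₁ ∪ I₂) : v i = e i :=
    Function.update_of_ne (ne_of_mem_of_not_mem hi hk) ..
  have e_eq {i} (hi : i ∈ I₁) : e i = v i := (v_eq (Finset.mem_union_left _ hi)).symm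
  have f_eq {i} (hi : i ∈ I₂) : f i = v k + v i := by
    rw [hf, v_k, v_eq (Finset.mem_union_right _ hi)]
  have e_family : (fun i : I₁ ↦ e i) = fun i : I₁ ↦ v i := funext fun i ↦ e_eq i.2
  have f_family : (fun j : I₂ ↦ f j) = fun j : I₂ ↦ v k + v j := funext fun j ↦ f_eq j.2
  rw [Set.image_congr fun i hi ↦ e_eq hi, Set.image_congr fun i hi ↦ f_eq hi, e_family, f_family]
  exact ⟨finrank_span_image_union_image_const_add hv hk,
    linearIndependent_sumElim_const_add_iff hv hk⟩

end Finrank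

/-- Lemme `lm:calc:rg`: rank of the family `{e_i : i ∈ I₁} ∪ {f_i : i ∈ I₂}`
where `f_i = h + e_i`, `h = -∑ e_i`, and `I₁ ∪ I₂ ≠ I`. -/
theorem stmt_4 {I : Type*} [Fintype I] [DecidableEq I] (hn : 3 ≤ Fintype.card I)
    (e : I → (I → ℝ)) (he : ∀ i, e i = Pi.single i 1)
    (h : I → ℝ) (hh : h = -∑ i, e i)
    (f : I → (I → ℝ)) (hf : ∀ i, f i = h + e i)
    (I₁ I₂ : Finset I) (hI : I₁ ∪ I₂ ≠ Finset.univ) :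
    (Module.finrank ℝ (Submodule.span ℝ ((e '' ↑I₁) ∪ (f '' ↑I₂))) =
      if I₁ ∩ I₂ = ∅ then (I₁ ∪ I₂).card else (I₁ ∪ I₂).card + 1) ∧
    (LinearIndependent ℝ (Sum.elim (fun i : ↥I₁ => e i) (fun j : ↥I₂ => f j)) ↔
      (I₁ ∩ I₂).card ≤ 1) := by
  exact stmt_4_general (funext he ▸ Pi.linearIndependent_single_one I ℝ) hh hf hI
end

section
/- Let I be a finite set with |I| = n ≥ 3, let J be a nonempty proper subset of I with |J| = m, and let i₁, …, i_m be an enumeration of J. Then cone({e_j : j ∈ J} ∪ {f_j : j ∈ J}) = ⋃_{k=1}^{m} cone({f_{i₁}, …, f_{i_k}} ∪ {e_{i_k}, e_{i_{k+1}}, …, e_{i_m}}). -/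
open scoped BigOperators

/-- The set of all finite nonnegative linear combinations of elements of `S`. -/
def coneGen {I : Type*} (S : Set (I → ℝ)) : Set (I → ℝ) :=
  {x | ∃ (k : ℕ) (c : Fin k → ℝ) (v : Fin k → (I → ℝ)),
    (∀ j, 0 ≤ c j) ∧ (∀ j, v j ∈ S) ∧ x = ∑ j, c j • v j}

/-!
A cone is a submodule over `ℝ≥0`, and the elements of `cone {e j, h + e j}` are the vectors
`∑ s i • e i + b • h` with `b ≤ ∑ s i`. Distribute the budget `b` greedily: turn each `s i • e i`
into `s i • (h + e i)` from the first index on, until `b` is used up. The index `k` at which this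
happens is the only one that needs both generators.
-/

open Set Submodule

open scoped NNReal

theorem coneGen_eq_span {I : Type*} (S : Set (I → ℝ)) : coneGen S = (span ℝ≥0 S : Set (I → ℝ)) := by
  ext x
  rw [SetLike.mem_coe, mem_span_set']
  constructor
  · rintro ⟨k, c, v, hc, hv, rfl⟩
    exact ⟨k, fun j => ⟨c j, hc j⟩, fun j => ⟨v j, hv j⟩, rfl⟩
  · rintro ⟨k, c, v, rfl⟩
    exact ⟨k, fun j => c j, fun j => v j, fun j => (c j).2, fun j => (v j).2, rfl⟩

section Subdivision

variable {R V ι : Type*} [Semiring R] [AddCommMonoid V] [Module R V]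

theorem exists_eq_sum_smul_add_smul_of_mem_span [PartialOrder R] [CanonicallyOrderedAdd R]
    [Nonempty ι] {e : ι → V} {h x : V}
    (hx : x ∈ span R (range e ∪ range fun i => h + e i)) :
    ∃ t : Finset ι, t.Nonempty ∧ ∃ (s : ι → R) (b : R),
      b ≤ ∑ i ∈ t, s i ∧ x = ∑ i ∈ t, s i • e i + b • h := by
  classical
  rw [span_union, mem_sup] at hx
  obtain ⟨y, hy, z, hz, rfl⟩ := hx
  obtain ⟨a, rfl⟩ := Finsupp.mem_span_range_iff_exists_finsupp.1 hy
  obtain ⟨c, rfl⟩ := Finsupp.mem_span_range_iff_exists_finsupp.1 hz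
  let t := insert (Classical.arbitrary ι) (a.support ∪ c.support)
  have ha : a.support ⊆ t := Finset.subset_union_left.trans (Finset.subset_insert _ _)
  have hc : c.support ⊆ t := Finset.subset_union_right.trans (Finset.subset_insert _ _)
  refine ⟨t, Finset.insert_nonempty _ _, a + c, ∑ i ∈ t, c i, ?_, ?_⟩
  · exact Finset.sum_le_sum fun i _ => le_add_self
  · rw [Finsupp.sum_of_support_subset _ ha _ (by simp),
      Finsupp.sum_of_support_subset _ hc _ (by simp)]
    simp only [Pi.add_apply, smul_add, add_smul, Finset.sum_add_distrib, Finset.sum_smul]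
    abel

theorem sum_smul_add_smul_mem_span_of_sum_le [PartialOrder R] [IsOrderedCancelAddMonoid R]
    [CanonicallyOrderedAdd R] [Preorder ι] (e : ι → V) (h : V) (s : ι → R) {t : Finset ι} {k : ι}
    {b : R} (htk : ∀ i ∈ t, i ≤ k) (hle : ∑ i ∈ t, s i ≤ b) (hb : b ≤ ∑ i ∈ t, s i + s k) :
    ∑ i ∈ t, s i • e i + s k • e k + b • h ∈
      span R ((fun i => h + e i) '' Iic k ∪ e '' Ici k) := by
  obtain ⟨d, rfl⟩ := exists_add_of_le hle
  obtain ⟨d', hd'⟩ := exists_add_of_le (le_of_add_le_add_left hb)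
  have hsplit : ∑ i ∈ t, s i • e i + s k • e k + (∑ i ∈ t, s i + d) • h =
      ∑ i ∈ t, s i • (h + e i) + d • (h + e k) + d' • e k := by
    simp only [hd', add_smul, smul_add, Finset.sum_add_distrib, Finset.sum_smul]
    abel
  have hshift : ∀ i ≤ k, h + e i ∈ span R ((fun i => h + e i) '' Iic k ∪ e '' Ici k) :=
    fun i hi => subset_span <| .inl ⟨i, hi, rfl⟩
  have hbase : e k ∈ span R ((fun i => h + e i) '' Iic k ∪ e '' Ici k) :=
    subset_span <| .inr ⟨k, self_mem_Ici, rfl⟩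
  rw [hsplit]
  exact add_mem (add_mem (sum_mem fun i hi => smul_mem _ _ (hshift i (htk i hi)))
    (smul_mem _ _ (hshift k le_rfl))) (smul_mem _ _ hbase)

variable [LinearOrder R] [IsOrderedCancelAddMonoid R] [CanonicallyOrderedAdd R] [LinearOrder ι]

theorem exists_sum_smul_add_smul_mem_span (e : ι → V) (h : V) (s : ι → R) {t : Finset ι}
    (ht : t.Nonempty) {b : R} (hb : b ≤ ∑ i ∈ t, s i) :
    ∃ k ∈ t, ∑ i ∈ t, s i • e i + b • h ∈
      span R ((fun i => h + e i) '' Iic k ∪ e '' Ici k) := by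
  induction t using Finset.induction_on_max with
  | empty => exact absurd ht Finset.not_nonempty_empty
  | insert a t hlt ih =>
    have ha : a ∉ t := fun hat => (hlt a hat).false
    rw [Finset.sum_insert ha, add_comm] at hb
    rw [Finset.sum_insert ha, add_comm (s a • e a)]
    by_cases hcut : t.Nonempty ∧ b ≤ ∑ i ∈ t, s i
    · obtain ⟨k, hkt, hk⟩ := ih hcut.1 hcut.2
      refine ⟨k, Finset.mem_insert_of_mem hkt, ?_⟩
      rw [add_right_comm]
      exact add_mem hk <| smul_mem _ _ <| subset_span <| .inr ⟨a, (hlt k hkt).le, rfl⟩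
    · have hle : ∑ i ∈ t, s i ≤ b := by
        rcases t.eq_empty_or_nonempty with rfl | hne
        · simp
        · exact (not_le.1 fun hle => hcut ⟨hne, hle⟩).le
      exact ⟨a, Finset.mem_insert_self a t,
        sum_smul_add_smul_mem_span_of_sum_le e h s (fun i hi => (hlt i hi).le) hle hb⟩

theorem stmt_8_general [Nonempty ι] (e : ι → V) (h : V) :
    (span R (range e ∪ range fun i => h + e i) : Set V) =
      ⋃ k, span R ((fun i => h + e i) '' Iic k ∪ e '' Ici k) := by
  refine Subset.antisymm (fun x hx => ?_) (iUnion_subset fun k => ?_)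
  · obtain ⟨t, ht, s, b, hb, rfl⟩ := exists_eq_sum_smul_add_smul_of_mem_span hx
    obtain ⟨k, -, hk⟩ := exists_sum_smul_add_smul_mem_span e h s ht hb
    exact mem_iUnion_of_mem k hk
  · rw [union_comm]
    exact span_mono (union_subset_union (image_subset_range _ _) (image_subset_range _ _))

end Subdivision

/-- Point 3 of proposition `prop:descr:ev` (covering part): for an enumeration
`i₁, …, i_m` of a nonempty proper subset `J ⊊ I`,
`cone({e_j, f_j : j ∈ J}) = ⋃_{k=1}^m cone({f_{i₁},…,f_{i_k}, e_{i_k},…,e_{i_m}})`. -/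
theorem stmt_8 {I : Type*} [Fintype I] [DecidableEq I] (hn : 3 ≤ Fintype.card I)
    (e : I → (I → ℝ)) (he : ∀ i, e i = Pi.single i 1)
    (h : I → ℝ) (hh : h = -∑ i, e i)
    (f : I → (I → ℝ)) (hf : ∀ i, f i = h + e i)
    (J : Finset I) (hJne : J.Nonempty) (hJprop : J ≠ Finset.univ)
    (m : ℕ) (hm : J.card = m)
    (idx : Fin m → I) (hinj : Function.Injective idx)
    (himg : Finset.image idx Finset.univ = J) :
    coneGen ((e '' ↑J) ∪ (f '' ↑J)) =
      ⋃ k : Fin m,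
        coneGen ((f '' (idx '' {l : Fin m | l ≤ k})) ∪ (e '' (idx '' {l : Fin m | k ≤ l}))) := by
  have : Nonempty (Fin m) := by simpa [← himg, Finset.univ_nonempty_iff] using hJne
  obtain rfl : f = fun i => h + e i := funext hf
  simp only [coneGen_eq_span, ← himg, Finset.coe_image, Finset.coe_univ, image_univ, image_image,
    ← range_comp]
  exact stmt_8_general (e ∘ idx) h
end

section
/- Let I be a finite set with |I| = n ≥ 3. Then ℝ^I = cone({e_i : i ∈ I}) ∪ ⋃_{i∈I} cone({e_j : j ≠ i} ∪ {f_j : j ≠ i}) ∪ ⋃_{i∈I} cone({h} ∪ {f_j : j ≠ i}); that is, every x ∈ ℝ^I lies in at least one of these 2n+1 cones. -/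
open scoped BigOperators

/-!
The vectors `e i` and `h = -∑ i, e i` generate the rays of the fan of projective space, whose
maximal cones omit one ray each. That fan is complete: subtracting the minimal coordinate of a
vector from all of them trades it for a multiple of `h`. Each maximal cone `cone({h} ∪ S)`
containing `h` is then subdivided along the vectors `h + v`, `v ∈ S`, into `cone({h} ∪ (h + S))`
and `cone(S ∪ (h + S))`, according to whether the coefficient of `h` exceeds the sum of the
coefficients of the vectors in `S`.
-/

lemma coneGen_eq_hull {I : Type*} (S : Set (I → ℝ)) :
    coneGen S = (PointedCone.hull ℝ S : Set (I → ℝ)) := by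
  ext x
  rw [SetLike.mem_coe, Submodule.mem_span_set']
  constructor
  · rintro ⟨k, c, v, hc, hv, rfl⟩
    exact ⟨k, fun j => ⟨c j, hc j⟩, fun j => ⟨v j, hv j⟩, rfl⟩
  · rintro ⟨k, c, v, rfl⟩
    exact ⟨k, fun j => c j, fun j => v j, fun j => (c j).2, fun j => (v j).2, rfl⟩

lemma sum_smul_eq_neg_smul_neg_sum_add {R E ι : Type*} [Ring R] [AddCommGroup E] [Module R E]
    [Fintype ι] [DecidableEq ι] (e : ι → E) (c : ι → R) (i : ι) :
    ∑ j, c j • e j = -c i • -∑ j, e j + ∑ j ∈ Finset.univ.erase i, (c j - c i) • e j := by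
  have erase_sum : ∑ j ∈ Finset.univ.erase i, (c j - c i) • e j = ∑ j, (c j - c i) • e j :=
    Finset.sum_erase _ (by rw [sub_self, zero_smul])
  rw [erase_sum, neg_smul_neg, Finset.smul_sum, ← Finset.sum_add_distrib]
  simp only [← add_smul, add_sub_cancel]

section OrderedRing

open PointedCone

variable {R E : Type*} [Ring R] [LinearOrder R] [IsOrderedRing R] [AddCommGroup E] [Module R E]

theorem univ_eq_hull_range_union_iUnion_hull_insert_neg_sum {ι : Type*} [Fintype ι] {e : ι → E}
    (he : Submodule.span R (Set.range e) = ⊤) :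
    (Set.univ : Set E) =
      (hull R (Set.range e) : Set E) ∪
      ⋃ i, (hull R (insert (-∑ j, e j) (e '' {j | j ≠ i})) : Set E) := by
  classical
  refine (Set.eq_univ_of_forall fun x => ?_).symm
  obtain ⟨c, rfl⟩ := (Submodule.mem_span_range_iff_exists_fun R).1 (he ▸ Submodule.mem_top : x ∈ _)
  by_cases hc : ∀ i, 0 ≤ c i
  · exact Or.inl <| sum_mem fun i _ => smul_mem _ (hc i) (subset_hull (Set.mem_range_self i))
  · obtain ⟨k, hk⟩ := not_forall.1 hc
    have : Nonempty ι := ⟨k⟩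
    obtain ⟨i, c_min⟩ := Finite.exists_min c
    have ci_nonpos : c i ≤ 0 := (c_min k).trans (not_le.1 hk).le
    refine Or.inr <| Set.mem_iUnion.2 ⟨i, ?_⟩
    rw [sum_smul_eq_neg_smul_neg_sum_add e c i]
    refine add_mem (smul_mem _ (neg_nonneg.2 ci_nonpos) (subset_hull (Set.mem_insert _ _))) ?_
    refine sum_mem fun j hj => smul_mem _ (sub_nonneg.2 (c_min j)) ?_
    exact subset_hull (Set.mem_insert_of_mem _ (Set.mem_image_of_mem e (Finset.ne_of_mem_erase hj)))

lemma add_smul_mem_hull_insert_union_hull {h v w : E} {S : Set E} (hv : v ∈ S) {r : R} (hr : 0 ≤ r)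
    (hw : w ∈ (hull R (insert h ((h + ·) '' S)) ∪ hull R (S ∪ (h + ·) '' S) : Set E)) :
    w + r • v ∈ (hull R (insert h ((h + ·) '' S)) ∪ hull R (S ∪ (h + ·) '' S) : Set E) := by
  have hv' : h + v ∈ (h + ·) '' S := Set.mem_image_of_mem _ hv
  rcases hw with hw | hw
  · obtain ⟨⟨t, ht⟩, y, hy, rfl⟩ := Submodule.mem_span_insert.1 hw
    change t • h + y + r • v ∈ _
    rcases le_total r t with hrt | htr
    · left
      have decomposition : t • h + y + r • v = (t - r) • h + y + r • (h + v) := by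
        rw [sub_smul, smul_add]; abel
      rw [decomposition]
      exact add_mem (add_mem (smul_mem _ (sub_nonneg.2 hrt) (subset_hull (Set.mem_insert _ _)))
        (Submodule.span_mono (Set.subset_insert _ _) hy))
        (smul_mem _ hr (subset_hull (Set.mem_insert_of_mem _ hv')))
    · right
      have decomposition : t • h + y + r • v = t • (h + v) + y + (r - t) • v := by
        rw [sub_smul, smul_add]; abel
      rw [decomposition]
      exact add_mem (add_mem (smul_mem _ ht (subset_hull (Or.inr hv')))
        (Submodule.span_mono Set.subset_union_right hy))
        (smul_mem _ (sub_nonneg.2 htr) (subset_hull (Or.inl hv)))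
  · exact Or.inr <| add_mem hw (smul_mem _ hr (subset_hull (Or.inl hv)))

theorem hull_insert_subset_hull_insert_add_union_hull (h : E) (S : Set E) :
    (hull R (insert h S) : Set E) ⊆
      hull R (insert h ((h + ·) '' S)) ∪ hull R (S ∪ (h + ·) '' S) := by
  intro x hx
  obtain ⟨t, z, hz, rfl⟩ := Submodule.mem_span_insert.1 hx
  clear hx
  set U : Set E := hull R (insert h ((h + ·) '' S)) ∪ hull R (S ∪ (h + ·) '' S)
  -- `U` is not closed under addition, but stability of `U` under adding `z` is additive in `z`.
  suffices add_mem_U : ∀ w ∈ U, w + z ∈ U from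
    add_mem_U _ (Or.inl (Submodule.smul_mem _ t (subset_hull (Set.mem_insert _ _))))
  induction hz using Submodule.closure_induction with
  | zero => simp only [add_zero, imp_self, implies_true]
  | add y z _ _ ihy ihz => exact fun w hw => add_assoc w y z ▸ ihz _ (ihy w hw)
  | smul_mem r v hv => exact fun w hw => add_smul_mem_hull_insert_union_hull hv r.2 hw

theorem stmt_9_general {I : Type*} [Fintype I] (e : I → E)
    (he : Submodule.span R (Set.range e) = ⊤) (h : E) (hh : h = -∑ i, e i)
    (f : I → E) (hf : ∀ i, f i = h + e i) :
    (Set.univ : Set E) =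
      (hull R (Set.range e) : Set E) ∪
      (⋃ i : I, (hull R ((e '' {j | j ≠ i}) ∪ (f '' {j | j ≠ i})) : Set E)) ∪
      (⋃ i : I, (hull R ({h} ∪ (f '' {j | j ≠ i})) : Set E)) := by
  have image_f (i : I) : (h + ·) '' (e '' {j | j ≠ i}) = f '' {j | j ≠ i} := by
    simp only [Set.image_image, ← hf]
  refine (Set.eq_univ_of_univ_subset ?_).symm
  rw [univ_eq_hull_range_union_iUnion_hull_insert_neg_sum he, ← hh, Set.union_assoc,
    Set.union_comm (⋃ i, _), ← Set.iUnion_union_distrib]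
  refine Set.union_subset_union_right _ (Set.iUnion_mono fun i => ?_)
  simpa only [image_f, Set.singleton_union] using
    hull_insert_subset_hull_insert_add_union_hull (R := R) h (e '' {j | j ≠ i})

end OrderedRing

/-- Point 5 of proposition `prop:descr:ev` (completeness): the `2n+1` cones
`cone({e_i : i ∈ I})`, `cone({e_j, f_j : j ≠ i})` and `cone({h} ∪ {f_j : j ≠ i})`
cover `ℝ^I`. -/
theorem stmt_9 {I : Type*} [Fintype I] [DecidableEq I] (hn : 3 ≤ Fintype.card I)
    (e : I → (I → ℝ)) (he : ∀ i, e i = Pi.single i 1)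
    (h : I → ℝ) (hh : h = -∑ i, e i)
    (f : I → (I → ℝ)) (hf : ∀ i, f i = h + e i) :
    (Set.univ : Set (I → ℝ)) =
      coneGen (Set.range e) ∪
      (⋃ i : I, coneGen ((e '' {j | j ≠ i}) ∪ (f '' {j | j ≠ i}))) ∪
      (⋃ i : I, coneGen ({h} ∪ (f '' {j | j ≠ i}))) := by
  have e_eq : e = Pi.basisFun ℝ I := funext fun i => (he i).trans (Pi.basisFun_apply ℝ I i).symm
  have span_e : Submodule.span ℝ (Set.range e) = ⊤ := e_eq ▸ (Pi.basisFun ℝ I).span_eq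
  simpa only [coneGen_eq_hull] using stmt_9_general e span_e h hh f hf
end

section
/- Let κ be a finite field with q elements and let n ≥ 1 be an integer. Then N_n(κ) = q · N_{n−1}(κ) + (q−1) · q^{2n−2}, where N_m(κ) denotes the number of pairs (x, y) ∈ κ^m × κ^m with ∑_{i=1}^{m} x_i y_i = 0 (so N₀(κ) = 1). -/
open scoped BigOperators

/-!
Split off the first coordinates: `∑ᵢ xᵢ yᵢ = a b + s`, where `s` is the same form in the remaining
`n - 1` coordinates. The equation `a b = -s` has `q - 1` solutions with `a ≠ 0`, whatever `s` is,
and `a = 0` adds `q` more exactly when `s = 0`. Summing over the remaining coordinates gives the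
recursion.
-/

open Finset

open scoped Matrix

theorem card_filter_mul_eq_of_ne_zero {G : Type*} [GroupWithZero G] [Fintype G] [DecidableEq G]
    {a : G} (ha : a ≠ 0) (s : G) : #{b | a * b = s} = 1 :=
  card_eq_one.2 ⟨a⁻¹ * s, by ext b; simp [eq_inv_mul_iff_mul_eq₀ ha]⟩

theorem card_filter_fst_mul_snd_eq {G : Type*} [GroupWithZero G] [Fintype G] [DecidableEq G]
    (s : G) :
    #{p : G × G | p.1 * p.2 = s} =
      (if s = 0 then Fintype.card G else 0) + (Fintype.card G - 1) := by
  have zero_fiber : #{b : G | 0 * b = s} = if s = 0 then Fintype.card G else 0 := by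
    split_ifs with hs <;> simp [hs, eq_comm]
  have nonzero_fibers : ∑ a ∈ univ.erase (0 : G), #{b | a * b = s} = Fintype.card G - 1 := by
    rw [sum_congr rfl fun a ha ↦ card_filter_mul_eq_of_ne_zero (ne_of_mem_erase ha) s]
    simp
  calc #{p : G × G | p.1 * p.2 = s}
    _ = ∑ a : G, #{b | a * b = s} := by simp only [card_filter, Fintype.sum_prod_type]
    _ = #{b : G | 0 * b = s} + ∑ a ∈ univ.erase (0 : G), #{b | a * b = s} :=
      (add_sum_erase _ _ (mem_univ 0)).symm
    _ = _ := by rw [zero_fiber, nonzero_fibers]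

section DivisionRing

variable {R : Type*} [DivisionRing R] [Fintype R] [DecidableEq R]

theorem card_filter_mul_add_eq_zero {α : Type*} [Fintype α] (f : α → R) :
    #{p : (R × R) × α | p.1.1 * p.1.2 + f p.2 = 0} =
      Fintype.card R * #{z | f z = 0} + (Fintype.card R - 1) * Fintype.card α := by
  calc #{p : (R × R) × α | p.1.1 * p.1.2 + f p.2 = 0}
    _ = ∑ z, #{p : R × R | p.1 * p.2 = -f z} := by
      simp only [card_filter, Fintype.sum_prod_type_right _, eq_neg_iff_add_eq_zero]
    _ = ∑ z, ((if f z = 0 then Fintype.card R else 0) + (Fintype.card R - 1)) := by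
      simp only [card_filter_fst_mul_snd_eq, neg_eq_zero]
    _ = Fintype.card R * #{z | f z = 0} + (Fintype.card R - 1) * Fintype.card α := by
      rw [sum_add_distrib, ← sum_filter]
      simp [mul_comm]

theorem card_filter_dotProduct_eq_zero_succ (m : ℕ) :
    #{p : (Fin (m + 1) → R) × (Fin (m + 1) → R) | p.1 ⬝ᵥ p.2 = 0} =
      Fintype.card R * #{p : (Fin m → R) × (Fin m → R) | p.1 ⬝ᵥ p.2 = 0} +
        (Fintype.card R - 1) * Fintype.card R ^ (2 * m) := by
  let cons : R × (Fin m → R) ≃ (Fin (m + 1) → R) := Fin.consEquiv fun _ ↦ R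
  let split : (R × R) × (Fin m → R) × (Fin m → R) ≃ (Fin (m + 1) → R) × (Fin (m + 1) → R) :=
    (Equiv.prodProdProdComm R R (Fin m → R) (Fin m → R)).trans (cons.prodCongr cons)
  have dotProduct_split (p : (R × R) × (Fin m → R) × (Fin m → R)) :
      (split p).1 ⬝ᵥ (split p).2 = p.1.1 * p.1.2 + p.2.1 ⬝ᵥ p.2.2 :=
    Matrix.cons_dotProduct_cons ..
  rw [← card_equiv split (s := {p | p.1.1 * p.1.2 + p.2.1 ⬝ᵥ p.2.2 = 0})
      (by simp [dotProduct_split]),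
    card_filter_mul_add_eq_zero fun p : (Fin m → R) × (Fin m → R) ↦ p.1 ⬝ᵥ p.2]
  simp [two_mul, pow_add]

end DivisionRing

/-- Recursion for the number `N_n(κ)` of pairs `(x,y) ∈ κⁿ × κⁿ` with `∑ xᵢyᵢ = 0`:
`N_n = q·N_{n-1} + (q-1)·q^{2n-2}`. -/
theorem stmt_11 (κ : Type*) [Field κ] [Fintype κ] (q : ℕ) (hq : Fintype.card κ = q)
    (N : ℕ → ℕ)
    (hN : ∀ m : ℕ, N m =
      Nat.card {p : (Fin m → κ) × (Fin m → κ) // ∑ i, p.1 i * p.2 i = 0})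
    (n : ℕ) (hn : 1 ≤ n) :
    N n = q * N (n - 1) + (q - 1) * q ^ (2 * n - 2) := by
  classical
  have N_eq (m : ℕ) : N m = #{p : (Fin m → κ) × (Fin m → κ) | p.1 ⬝ᵥ p.2 = 0} := by
    rw [hN, Nat.card_eq_fintype_card, Fintype.card_subtype]
    rfl
  obtain ⟨m, rfl⟩ := Nat.exists_eq_add_of_le' hn
  have two_mul_succ_sub : 2 * (m + 1) - 2 = 2 * m := by omega
  rw [two_mul_succ_sub, Nat.add_sub_cancel, N_eq, N_eq, ← hq]
  exact card_filter_dotProduct_eq_zero_succ m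
end

section
/- Let κ be a finite field with q elements and let n ≥ 1 be an integer. Then the (convergent) sum of nonnegative real numbers ∑_{d ∈ ℕⁿ} q^{min(1, d₁, …, d_n)} · q^{−(d₁+⋯+d_n)} equals q^{−2n+1} · (1 − q^{−1})^{−n} · N_n(κ), where N_n(κ) denotes the number of pairs (x, y) ∈ κⁿ × κⁿ with ∑_{i=1}^{n} x_i y_i = 0. -/
open scoped BigOperators

/-!
Both sides equal `(1 - q⁻¹)⁻ⁿ (1 + (q - 1) q⁻ⁿ)`. For the series, the weight `q ^ min(1, d)` is `1`
plus `q - 1` times the indicator of `d` having no zero entry; on that set, the shift `d ↦ d + 1`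
turns the sum of `q^{-|d|}` into `q⁻ⁿ` times the full sum, which is the `n`-th power of a geometric
series. For the count, each `x ≠ 0` defines a surjective functional, whose kernel has `q ^ (n - 1)`
elements, while `x = 0` contributes all `q ^ n` vectors `y`.
-/

section ProductSeries

variable {R : Type*} [NormedCommRing R]

theorem summable_norm_prod_fin {n : ℕ} {β : Fin n → Type*} {f : ∀ i, β i → R}
    (hf : ∀ i, Summable fun b => ‖f i b‖) :
    Summable fun d : ∀ i, β i => ‖∏ i, f i (d i)‖ := by
  induction n with
  | zero => exact .of_finite
  | succ n ih =>
    rw [← (Fin.consEquiv β).summable_iff]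
    simpa [Function.comp_def, Fin.consEquiv, Fin.prod_univ_succ] using
      (hf 0).mul_norm (ih fun i => hf i.succ)

theorem hasSum_prod_fin [CompleteSpace R] {n : ℕ} {β : Fin n → Type*} {f : ∀ i, β i → R}
    {a : Fin n → R} (hf : ∀ i, Summable fun b => ‖f i b‖) (ha : ∀ i, HasSum (f i) (a i)) :
    HasSum (fun d : ∀ i, β i => ∏ i, f i (d i)) (∏ i, a i) := by
  induction n with
  | zero => simp
  | succ n ih =>
    have hasSum_tail := ih (fun i => hf i.succ) fun i => ha i.succ
    have summable_mul := summable_mul_of_summable_norm (hf 0)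
      (summable_norm_prod_fin fun i => hf i.succ)
    rw [← (Fin.consEquiv β).hasSum_iff]
    simpa [Function.comp_def, Fin.consEquiv, Fin.prod_univ_succ] using
      (ha 0).mul hasSum_tail summable_mul

theorem hasSum_prod_pi [CompleteSpace R] {ι : Type*} [Fintype ι] {β : ι → Type*}
    {f : ∀ i, β i → R} {a : ι → R} (hf : ∀ i, Summable fun b => ‖f i b‖)
    (ha : ∀ i, HasSum (f i) (a i)) :
    HasSum (fun d : ∀ i, β i => ∏ i, f i (d i)) (∏ i, a i) := by
  let e := (Fintype.equivFin ι).symm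
  rw [← (Equiv.piCongrLeft β e).hasSum_iff]
  simpa only [Function.comp_def, ← e.prod_comp, Equiv.piCongrLeft_apply_apply] using
    hasSum_prod_fin (fun i => hf (e i)) fun i => ha (e i)

end ProductSeries

section GeometricSeries

theorem min_one_inf'_eq_ite {ι : Type*} {s : Finset ι} (hs : s.Nonempty) (d : ι → ℕ) :
    min 1 (s.inf' hs d) = if ∀ i ∈ s, 0 < d i then 1 else 0 := by
  simp only [← Finset.lt_inf'_iff hs]
  split_ifs <;> omega

variable {K ι : Type*} [NormedField K] [CompleteSpace K] [Fintype ι] {r : K}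

theorem hasSum_pow_sum_of_norm_lt_one (hr : ‖r‖ < 1) :
    HasSum (fun d : ι → ℕ => r ^ ∑ i, d i) ((1 - r)⁻¹ ^ Fintype.card ι) := by
  simpa only [Finset.prod_pow_eq_pow_sum, Finset.prod_const, Finset.card_univ] using
    hasSum_prod_pi (ι := ι) (fun _ => summable_norm_geometric_of_norm_lt_one hr)
      fun _ => hasSum_geometric_of_norm_lt_one hr

theorem hasSum_ite_pos_pow_sum_of_norm_lt_one (hr : ‖r‖ < 1) :
    HasSum (fun d : ι → ℕ => if ∀ i, 0 < d i then r ^ ∑ i, d i else 0)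
      (r ^ Fintype.card ι * (1 - r)⁻¹ ^ Fintype.card ι) := by
  have support_subset : ∀ d ∉ Set.range (· + 1 : (ι → ℕ) → ι → ℕ),
      (if ∀ i, 0 < d i then r ^ ∑ i, d i else 0) = 0 := fun d hd =>
    if_neg fun hpos => hd ⟨d - 1, funext fun i => Nat.sub_add_cancel (hpos i)⟩
  rw [← (add_left_injective (1 : ι → ℕ)).hasSum_iff support_subset]
  simpa [Function.comp_def, Finset.sum_add_distrib, pow_add, mul_comm] using
    (hasSum_pow_sum_of_norm_lt_one (ι := ι) hr).mul_left (r ^ Fintype.card ι)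

theorem hasSum_pow_min_one_inf'_mul_pow_sum (h : (Finset.univ : Finset ι).Nonempty)
    (hr : ‖r‖ < 1) (a : K) :
    HasSum (fun d : ι → ℕ => a ^ min 1 (Finset.univ.inf' h d) * r ^ ∑ i, d i)
      ((1 - r)⁻¹ ^ Fintype.card ι * (1 + (a - 1) * r ^ Fintype.card ι)) := by
  convert (hasSum_pow_sum_of_norm_lt_one hr).add
    ((hasSum_ite_pos_pow_sum_of_norm_lt_one hr).mul_left (a - 1)) using 1
  · funext d
    simp only [min_one_inf'_eq_ite, Finset.mem_univ, forall_const]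
    split_ifs <;> ring
  · ring

end GeometricSeries

section BilinearZeros

variable {K V W : Type*} [Field K] [AddCommGroup V] [Module K V] [AddCommGroup W] [Module K W]

theorem card_mul_card_ker_of_ne_zero {φ : Module.Dual K V} (hφ : φ ≠ 0) :
    Nat.card K * Nat.card φ.ker = Nat.card V := by
  rw [φ.ker.card_eq_card_quotient_mul_card, mul_comm,
    Nat.card_congr (φ.quotKerEquivOfSurjective (LinearMap.surjective hφ)).toEquiv]

theorem card_mul_card_bilin_eq_zero_add_card [Finite V] [Finite W] {B : V →ₗ[K] Module.Dual K W}
    (hB : B.SeparatingLeft) :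
    Nat.card K * Nat.card {p : V × W // B p.1 p.2 = 0} + Nat.card W =
      (Nat.card V + Nat.card K) * Nat.card W := by
  classical
  have := Fintype.ofFinite V
  -- The indicator terms absorb the exceptional fiber over `x = 0` without subtraction in `ℕ`.
  have fiber (x : V) : Nat.card K * Nat.card (B x).ker + (if x = 0 then Nat.card W else 0) =
      Nat.card W + (if x = 0 then Nat.card K * Nat.card W else 0) := by
    split_ifs with hx
    · simp [hx, add_comm]
    · rw [card_mul_card_ker_of_ne_zero fun h => hx (hB x fun y => LinearMap.congr_fun h y)]
  calc Nat.card K * Nat.card {p : V × W // B p.1 p.2 = 0} + Nat.card W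
      = ∑ x, (Nat.card K * Nat.card (B x).ker + if x = 0 then Nat.card W else 0) := by
        rw [Nat.card_congr (Equiv.subtypeProdEquivSigmaSubtype fun x y => B x y = 0),
          Nat.card_sigma, Finset.sum_add_distrib, Finset.mul_sum, Fintype.sum_ite_eq']
        rfl
    _ = ∑ x, (Nat.card W + if x = 0 then Nat.card K * Nat.card W else 0) :=
        Finset.sum_congr rfl fun x _ => fiber x
    _ = (Nat.card V + Nat.card K) * Nat.card W := by
        simp [Finset.sum_add_distrib, add_mul]

theorem card_mul_card_sum_mul_eq_zero_add_card_pow {ι : Type*} [Fintype ι] [Finite K] :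
    Nat.card K * Nat.card {p : (ι → K) × (ι → K) // ∑ i, p.1 i * p.2 i = 0} +
        Nat.card K ^ Fintype.card ι =
      (Nat.card K ^ Fintype.card ι + Nat.card K) * Nat.card K ^ Fintype.card ι := by
  classical
  have separating : (dotProductEquiv K ι).toLinearMap.SeparatingLeft :=
    LinearMap.separatingLeft_iff_ker_eq_bot.mpr (dotProductEquiv K ι).ker
  simpa [dotProduct, Nat.card_fun] using card_mul_card_bilin_eq_zero_add_card separating

theorem zpow_card_mul_card_sum_mul_eq_zero {ι : Type*} [Fintype ι] [Finite K]
    (F : Type*) [Field F] [CharZero F] :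
    (Nat.card K : F) ^ (-(2 * (Fintype.card ι : ℤ)) + 1) *
        Nat.card {p : (ι → K) × (ι → K) // ∑ i, p.1 i * p.2 i = 0} =
      1 + (Nat.card K - 1) * (Nat.card K : F)⁻¹ ^ Fintype.card ι := by
  have card_ne_zero : (Nat.card K : F) ≠ 0 := Nat.cast_ne_zero.mpr Nat.card_pos.ne'
  have count := congrArg (Nat.cast : ℕ → F)
    (card_mul_card_sum_mul_eq_zero_add_card_pow (K := K) (ι := ι))
  push_cast at count
  rw [zpow_add₀ card_ne_zero, zpow_one, zpow_neg, mul_comm (2 : ℤ), zpow_mul, zpow_natCast,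
    zpow_ofNat, inv_pow]
  field_simp
  linear_combination count

end BilinearZeros

/-- `∑_{d ∈ ℕⁿ} q^{min(1,d₁,…,dₙ)} q^{-(d₁+⋯+dₙ)} = q^{-2n+1}(1-q⁻¹)^{-n} N_n(κ)`,
where `N_n(κ)` counts pairs `(x,y) ∈ κⁿ × κⁿ` with `∑ xᵢyᵢ = 0`. -/
theorem stmt_12 (κ : Type*) [Field κ] [Fintype κ] (q : ℕ) (hq : Fintype.card κ = q)
    (n : ℕ) (hn : 1 ≤ n) :
    (∑' d : Fin n → ℕ,
        (q : ℝ) ^ (min 1 (Finset.univ.inf' ⟨⟨0, by omega⟩, Finset.mem_univ _⟩ d)) *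
          (q : ℝ) ^ (-(∑ i, (d i : ℤ)))) =
      (q : ℝ) ^ (-(2 * (n : ℤ)) + 1) * ((1 - (q : ℝ)⁻¹) ^ n)⁻¹ *
        (Nat.card {p : (Fin n → κ) × (Fin n → κ) // ∑ i, p.1 i * p.2 i = 0} : ℝ) := by
  have one_lt_q : (1 : ℝ) < q := by exact_mod_cast hq ▸ Fintype.one_lt_card (α := κ)
  have norm_inv_lt_one : ‖(q : ℝ)⁻¹‖ < 1 := by simpa using inv_lt_one_of_one_lt₀ one_lt_q
  have zpow_eq (d : Fin n → ℕ) : (q : ℝ) ^ (-∑ i, (d i : ℤ)) = (q : ℝ)⁻¹ ^ ∑ i, d i := by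
    rw [← Nat.cast_sum, zpow_neg, zpow_natCast, inv_pow]
  have series := hasSum_pow_min_one_inf'_mul_pow_sum (ι := Fin n)
    ⟨⟨0, by omega⟩, Finset.mem_univ _⟩ norm_inv_lt_one (q : ℝ)
  have density := zpow_card_mul_card_sum_mul_eq_zero (K := κ) (ι := Fin n) ℝ
  rw [Fintype.card_fin, Nat.card_eq_fintype_card, hq] at density
  rw [tsum_congr fun d => by rw [zpow_eq], series.tsum_eq, Fintype.card_fin, mul_right_comm,
    density, inv_pow (1 - (q : ℝ)⁻¹), mul_comm]
end

section
/- Let κ be a finite field with q elements and let n ≥ 2 be an integer. For f₀ ∈ {0,1}, f = (f₁,…,f_n) ∈ {0,1}ⁿ and g = (g₁,…,g_n) ∈ {0,1}ⁿ, define fact(f₀,f,g) = (1−q⁻¹)ⁿ · q^{−f₀} · ∑_{d∈ℕⁿ, d_i ≥ f_i+g_i for all i} q^{min(d₁,…,d_n) − (d₁+⋯+d_n)} (a convergent sum of positive reals), and define dens(f₀,f,g) = q^{−2n} · #{ (x₀, x, y) ∈ κ × κⁿ × κⁿ : x₀ = 0 if f₀ = 1; x_i = 0 whenever f_i = 1;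 y_i = 0 whenever g_i = 1; and ∑_{i=1}^{n} x_i y_i = 0 }. Then for all f₀ ∈ {0,1}, all f₂,…,f_n ∈ {0,1} and all g ∈ {0,1}ⁿ: fact(f₀,(0,f₂,…,f_n),g) − fact(f₀,(1,f₂,…,f_n),g) = dens(f₀,(0,f₂,…,f_n),g) − dens(f₀,(1,f₂,…,f_n),g). -/
open scoped BigOperators

/-!
Put `q = #κ`. For `d ∈ ℕⁿ` write
`q ^ min d = 1 + (q - 1) · [d ≥ 1] + (q ^ min d - q) · [d ≥ 2]`.
Since `f + g ≤ 2`, summing this against `q ^ (-∑ dᵢ)` over `d ≥ f + g` shows that `fact f₀ f g` is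
`q ^ (-f₀) · (q ^ (-∑ bᵢ) + (q - 1) · q ^ (-∑ max bᵢ 1))`, where `b = f + g`, plus a series over
`d ≥ 2` in which neither `f` nor `g` occurs. The displayed expression is exactly `dens f₀ f g`: a
linear form on a finite vector space `W` vanishes on `#W / q` vectors, or on all of them if it is
zero, so counting solutions of `∑ xᵢ yᵢ = 0` amounts to counting the `x` that are orthogonal to
every admissible `y`. Hence `fact f₀ f g - dens f₀ f g` depends neither on `f` nor on `g`.
-/

open Finset

section GeometricSeries

variable {ι : Type*} [Fintype ι]

theorem hasSum_prod_fin_of_nonneg {α : Type*} {m : ℕ} {F : Fin m → α → ℝ} {A : Fin m → ℝ}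
    (hF : ∀ i a, 0 ≤ F i a) (hA : ∀ i, HasSum (F i) (A i)) :
    HasSum (fun d : Fin m → α ↦ ∏ i, F i (d i)) (∏ i, A i) := by
  induction m with
  | zero => simp
  | succ m ih =>
    let tail (d : Fin m → α) : ℝ := ∏ i : Fin m, F i.succ (d i)
    have htail : HasSum tail (∏ i : Fin m, A i.succ) := ih (fun i ↦ hF i.succ) (fun i ↦ hA i.succ)
    have hsummable : Summable fun p : α × (Fin m → α) ↦ F 0 p.1 * tail p.2 :=
      (hA 0).summable.mul_of_nonneg htail.summable (hF 0)
        (fun d ↦ prod_nonneg fun i _ ↦ hF i.succ (d i))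
    rw [← (Fin.consEquiv fun _ ↦ α).hasSum_iff, Fin.prod_univ_succ]
    convert! (hA 0).mul htail hsummable using 2 with p
    simp [tail, Fin.prod_univ_succ, Fin.consEquiv]

theorem hasSum_prod_of_nonneg {α : Type*} {F : ι → α → ℝ} {A : ι → ℝ}
    (hF : ∀ i a, 0 ≤ F i a) (hA : ∀ i, HasSum (F i) (A i)) :
    HasSum (fun d : ι → α ↦ ∏ i, F i (d i)) (∏ i, A i) := by
  let e := (Fintype.equivFin ι).symm
  rw [← (e.arrowCongr (Equiv.refl α)).hasSum_iff, ← e.prod_comp]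
  convert! hasSum_prod_fin_of_nonneg (fun i ↦ hF (e i)) (fun i ↦ hA (e i)) using 2 with d
  simp [← e.prod_comp]

variable {x : ℝ}

theorem hasSum_pow_sum (h₀ : 0 ≤ x) (h₁ : x < 1) :
    HasSum (fun d : ι → ℕ ↦ x ^ ∑ i, d i) ((1 - x)⁻¹ ^ Fintype.card ι) := by
  simpa [prod_pow_eq_pow_sum] using
    hasSum_prod_of_nonneg (fun (_ : ι) k ↦ pow_nonneg h₀ k)
      (fun _ ↦ hasSum_geometric_of_lt_one h₀ h₁)

theorem hasSum_indicator_Ici_pow_sum (h₀ : 0 ≤ x) (h₁ : x < 1) (b : ι → ℕ) :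
    HasSum ((Set.Ici b).indicator fun d ↦ x ^ ∑ i, d i)
      (x ^ (∑ i, b i) * (1 - x)⁻¹ ^ Fintype.card ι) := by
  have hrange : Set.range (· + b) = Set.Ici b := by
    simpa using Set.range_add_eq_image_Ici (f := id) (k := b)
  rw [← hasSum_subtype_iff_indicator, ← hrange, Function.comp_def,
    (add_left_injective b).hasSum_range_iff (f := fun d : ι → ℕ ↦ x ^ ∑ i, d i)]
  convert! (hasSum_pow_sum h₀ h₁).mul_left (x ^ ∑ i, b i) using 2 with d
  simp [sum_add_distrib, pow_add, mul_comm]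

end GeometricSeries

section LocalFactor

variable {ι : Type*} [Fintype ι] {q : ℝ}

section Nonempty

variable [Nonempty ι]

/-- The weight `q ^ (min d - ∑ dᵢ)` of the exponent vector `d` in the local height zeta function. -/
noncomputable def localWeight (q : ℝ) (d : ι → ℕ) : ℝ :=
  q ^ (((univ.inf' univ_nonempty d : ℕ) : ℤ) - ∑ i, (d i : ℤ))

/-- The quantity `fact(f₀, f, g)` of the statement, over an arbitrary index type and for a real
number `q`. It is the local factor of the height zeta function. -/
noncomputable def localFactor (q : ℝ) (f₀ : ℕ) (f g : ι → ℕ) : ℝ :=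
  (1 - q⁻¹) ^ Fintype.card ι * q ^ (-(f₀ : ℤ)) * ∑' d : Set.Ici (f + g), localWeight q d.1

theorem localFactor_eq_tsum_ite (q : ℝ) (f₀ : ℕ) (f g : ι → ℕ)
    [∀ d : ι → ℕ, Decidable (∀ i, f i + g i ≤ d i)] :
    localFactor q f₀ f g =
      (1 - q⁻¹) ^ Fintype.card ι * q ^ (-(f₀ : ℤ)) *
        ∑' d : ι → ℕ, if ∀ i, f i + g i ≤ d i then localWeight q d else 0 := by
  classical
  rw [localFactor, tsum_subtype (Set.Ici (f + g)) (localWeight q)]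
  simp only [Set.indicator_apply, Set.mem_Ici, Pi.le_def, Pi.add_apply]

theorem localWeight_eq_pow_mul (hq : q ≠ 0) (d : ι → ℕ) :
    localWeight q d = q ^ univ.inf' univ_nonempty d * q⁻¹ ^ ∑ i, d i := by
  rw [localWeight, zpow_sub₀ hq, div_eq_mul_inv, inv_pow, ← Nat.cast_sum, zpow_natCast,
    zpow_natCast]

theorem indicator_Ici_localWeight (hq : q ≠ 0) {b : ι → ℕ} (hb : b ≤ 2) (d : ι → ℕ) :
    (Set.Ici b).indicator (localWeight q) d =
      (Set.Ici b).indicator (fun d ↦ q⁻¹ ^ ∑ i, d i) d +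
        (q - 1) * (Set.Ici (b ⊔ 1)).indicator (fun d ↦ q⁻¹ ^ ∑ i, d i) d +
        (Set.Ici 2).indicator (fun d ↦ localWeight q d - q * q⁻¹ ^ ∑ i, d i) d := by
  classical
  set m := univ.inf' univ_nonempty d with hm
  have one_le : 1 ≤ d ↔ 1 ≤ m := by simp [hm, Pi.le_def]
  have two_le : 2 ≤ d ↔ 2 ≤ m := by simp [hm, Pi.le_def]
  have le_of_two_le : 2 ≤ m → b ≤ d := fun h ↦ hb.trans (two_le.mpr h)
  simp only [Set.indicator_apply, Set.mem_Ici, sup_le_iff, one_le, two_le,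
    localWeight_eq_pow_mul hq, ← hm]
  by_cases hbd : b ≤ d
  · obtain h | h | h : m = 0 ∨ m = 1 ∨ 2 ≤ m := by omega
    · simp [h, hbd]
    · simp [h, hbd]; ring
    · simp [h, hbd, one_le_two.trans h]; ring
  · simp [hbd, mt le_of_two_le hbd]

end Nonempty

variable [Nontrivial ι]

theorem summable_localWeight (hq : 1 < q) :
    Summable (localWeight q : (ι → ℕ) → ℝ) := by
  have hq₀ : 0 < q := by positivity
  set r := √q⁻¹
  have hr₀ : 0 ≤ r := Real.sqrt_nonneg _
  have hr₁ : r < 1 := (Real.sqrt_lt' one_pos).mpr (by simpa using inv_lt_one_of_one_lt₀ hq)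
  have hr_sq : r ^ 2 = q⁻¹ := Real.sq_sqrt (by positivity)
  have hr_sq_mul : r ^ 2 * q = 1 := by rw [hr_sq, inv_mul_cancel₀ hq₀.ne']
  refine .of_nonneg_of_le (fun d ↦ zpow_nonneg hq₀.le _) (fun d ↦ ?_)
    (hasSum_pow_sum hr₀ hr₁).summable
  set m := univ.inf' univ_nonempty d
  have two_mul_min_le : 2 * m ≤ ∑ i, d i :=
    calc 2 * m ≤ Fintype.card ι * m := by gcongr; exact Fintype.one_lt_card
      _ ≤ ∑ i, d i := by simpa using card_nsmul_le_sum univ d m fun i hi ↦ inf'_le d hi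
  obtain ⟨k, hk⟩ := Nat.exists_eq_add_of_le two_mul_min_le
  calc localWeight q d = (r ^ 2 * q) ^ m * (r ^ 2) ^ (m + k) := by
        rw [localWeight_eq_pow_mul hq₀.ne', hk, ← hr_sq]; ring
    _ = r ^ (∑ i, d i + k) := by rw [hr_sq_mul, hk]; ring
    _ ≤ r ^ ∑ i, d i := pow_le_pow_of_le_one hr₀ hr₁.le (Nat.le_add_right _ _)

theorem tsum_Ici_localWeight (hq : 1 < q) {b : ι → ℕ} (hb : b ≤ 2) :
    ∑' d : Set.Ici b, localWeight q d.1 =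
      (q⁻¹ ^ (∑ i, b i) + (q - 1) * q⁻¹ ^ ∑ i, (b ⊔ 1) i) * (1 - q⁻¹)⁻¹ ^ Fintype.card ι +
        ∑' d : Set.Ici (2 : ι → ℕ), (localWeight q d.1 - q * q⁻¹ ^ ∑ i, d.1 i) := by
  have hq₀ : 0 < q := by positivity
  have hx₀ : 0 ≤ q⁻¹ := by positivity
  have hx₁ : q⁻¹ < 1 := inv_lt_one_of_one_lt₀ hq
  have hrest : Summable fun d : ι → ℕ ↦ localWeight q d - q * q⁻¹ ^ ∑ i, d i :=
    (summable_localWeight hq).sub ((hasSum_pow_sum hx₀ hx₁).summable.mul_left q)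
  have hsum := ((hasSum_indicator_Ici_pow_sum hx₀ hx₁ b).add
    ((hasSum_indicator_Ici_pow_sum hx₀ hx₁ (b ⊔ 1)).mul_left (q - 1))).add
    (hrest.indicator (Set.Ici 2)).hasSum
  simp only [← indicator_Ici_localWeight hq₀.ne' hb] at hsum
  rw [tsum_subtype (Set.Ici b) (localWeight q), hsum.tsum_eq,
    tsum_subtype (Set.Ici 2) fun d : ι → ℕ ↦ localWeight q d - q * q⁻¹ ^ ∑ i, d i]
  ring

theorem localFactor_eq (hq : 1 < q) (f₀ : ℕ) {f g : ι → ℕ} (hf : f ≤ 1) (hg : g ≤ 1) :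
    localFactor q f₀ f g =
      q ^ (-(f₀ : ℤ)) * (q⁻¹ ^ (∑ i, (f + g) i) + (q - 1) * q⁻¹ ^ ∑ i, ((f + g) ⊔ 1) i) +
        (1 - q⁻¹) ^ Fintype.card ι * q ^ (-(f₀ : ℤ)) *
          ∑' d : Set.Ici (2 : ι → ℕ), (localWeight q d.1 - q * q⁻¹ ^ ∑ i, d.1 i) := by
  have hcancel : (1 - q⁻¹) ^ Fintype.card ι * (1 - q⁻¹)⁻¹ ^ Fintype.card ι = 1 := by
    rw [← mul_pow, mul_inv_cancel₀ (sub_pos.mpr (inv_lt_one_of_one_lt₀ hq)).ne', one_pow]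
  rw [localFactor, tsum_Ici_localWeight hq (one_add_one_eq_two (R := ι → ℕ) ▸ add_le_add hf hg)]
  linear_combination (q ^ (-(f₀ : ℤ)) *
    (q⁻¹ ^ (∑ i, (f + g) i) + (q - 1) * q⁻¹ ^ ∑ i, ((f + g) ⊔ 1) i)) * hcancel

end LocalFactor

section Counting

variable {K V W : Type*} [Field K] [AddCommGroup V] [Module K V] [AddCommGroup W] [Module K W]

theorem natCard_mul_natCard_ker_of_ne_zero {φ : W →ₗ[K] K} (hφ : φ ≠ 0) :
    Nat.card K * Nat.card (LinearMap.ker φ) = Nat.card W := by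
  rw [Submodule.card_eq_card_quotient_mul_card (LinearMap.ker φ), mul_comm,
    Nat.card_congr (φ.quotKerEquivOfSurjective (LinearMap.surjective hφ)).toEquiv, mul_comm]

theorem natCard_mul_natCard_orthogonal_pairs [Finite V] [Finite W] (B : V →ₗ[K] W →ₗ[K] K) :
    (Nat.card K : ℝ) * Nat.card {p : V × W // B p.1 p.2 = 0} =
      Nat.card W * (Nat.card V + (Nat.card K - 1) * Nat.card (LinearMap.ker B)) := by
  classical
  have := Fintype.ofFinite V
  have hcard_ker (v : V) : (Nat.card K : ℝ) * Nat.card (LinearMap.ker (B v)) =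
      Nat.card W * (1 + if B v = 0 then (Nat.card K : ℝ) - 1 else 0) := by
    split_ifs with hv
    · rw [hv, LinearMap.ker_zero, Nat.card_congr Submodule.topEquiv.toEquiv]; ring
    · rw [add_zero, mul_one]; exact_mod_cast natCard_mul_natCard_ker_of_ne_zero hv
  calc (Nat.card K : ℝ) * Nat.card {p : V × W // B p.1 p.2 = 0}
      = ∑ v, (Nat.card K : ℝ) * Nat.card (LinearMap.ker (B v)) := by
        rw [Nat.card_congr (Equiv.subtypeProdEquivSigmaSubtype fun v w ↦ B v w = 0),
          Nat.card_sigma, Nat.cast_sum, mul_sum]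
        rfl
    _ = Nat.card W * (Nat.card V + (Nat.card K - 1) * Nat.card (LinearMap.ker B)) := by
        have hker : Nat.card (LinearMap.ker B) = #{v | B v = 0} := by
          simp [Nat.card_eq_fintype_card, Fintype.card_subtype]
        simp only [hcard_ker, ← mul_sum, sum_add_distrib, ← sum_filter, sum_const, hker]
        simp [mul_comm]

end Counting

section LocalDensity

section Exponents

variable {ι : Type*} {f g : ι → ℕ}

theorem indicator_eq_one_of_le_one (hf : f ≤ 1) :
    {i | f i = 1}.indicator 1 = f := by
  classical
  funext i
  have hfi : f i ≤ 1 := hf i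
  simp only [Set.indicator_apply, Set.mem_ofPred_eq, Pi.one_apply]
  grind

theorem indicator_union_compl_add_indicator (hf : f ≤ 1) (hg : g ≤ 1) :
    ({i | f i = 1} ∪ {i | g i = 1}ᶜ).indicator 1 + {i | g i = 1}.indicator 1 = (f + g) ⊔ 1 := by
  classical
  funext i
  have hfi : f i ≤ 1 := hf i
  have hgi : g i ≤ 1 := hg i
  simp only [Pi.add_apply, Pi.sup_apply, Pi.one_apply, Set.indicator_apply, Set.mem_union,
    Set.mem_compl_iff, Set.mem_ofPred_eq]
  grind

end Exponents

variable (κ : Type*) [Field κ] {ι : Type*}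

/-- The coordinate subspace of `κ^ι` of the vectors that vanish on `S`. -/
abbrev vanishingOn (S : Set ι) : Submodule κ (ι → κ) := Submodule.pi S fun _ ↦ ⊥

variable {κ} in
theorem mem_vanishingOn {S : Set ι} {x : ι → κ} : x ∈ vanishingOn κ S ↔ ∀ i ∈ S, x i = 0 := by
  simp [vanishingOn]

variable [Fintype ι]

/-- The dot product, restricted to the vectors vanishing on `S` and those vanishing on `T`. -/
def dotOnVanishing (S T : Set ι) : vanishingOn κ S →ₗ[κ] vanishingOn κ T →ₗ[κ] κ :=
  (dotProductBilin κ κ).domRestrict₁₂ _ _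

variable {κ} in
theorem dotOnVanishing_apply {S T : Set ι} (v : vanishingOn κ S) (w : vanishingOn κ T) :
    dotOnVanishing κ S T v w = ∑ i, v.1 i * w.1 i :=
  rfl

theorem map_ker_dotOnVanishing (S T : Set ι) :
    (LinearMap.ker (dotOnVanishing κ S T)).map (vanishingOn κ S).subtype =
      vanishingOn κ (S ∪ Tᶜ) := by
  classical
  ext x
  simp only [Submodule.mem_map, LinearMap.mem_ker, Submodule.subtype_apply, mem_vanishingOn]
  constructor
  · rintro ⟨v, hv, rfl⟩ i (hi | hi)
    · exact mem_vanishingOn.mp v.2 i hi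
    · have hsingle : Pi.single i 1 ∈ vanishingOn κ T :=
        mem_vanishingOn.mpr fun j hj ↦ Pi.single_eq_of_ne (by rintro rfl; exact hi hj) 1
      simpa [Pi.single_apply] using
        (dotOnVanishing_apply v _).symm.trans (LinearMap.congr_fun hv ⟨Pi.single i 1, hsingle⟩)
  · intro hx
    refine ⟨⟨x, mem_vanishingOn.mpr fun i hi ↦ hx i (.inl hi)⟩, LinearMap.ext fun w ↦ ?_, rfl⟩
    refine (dotOnVanishing_apply _ w).trans (sum_eq_zero fun i _ ↦ ?_)
    by_cases hi : i ∈ T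
    · rw [mem_vanishingOn.mp w.2 i hi, mul_zero]
    · exact mul_eq_zero_of_left (hx i (.inr hi)) _

theorem natCard_ker_dotOnVanishing (S T : Set ι) :
    Nat.card (LinearMap.ker (dotOnVanishing κ S T)) = Nat.card (vanishingOn κ (S ∪ Tᶜ)) := by
  rw [← map_ker_dotOnVanishing]
  exact Nat.card_congr (Submodule.equivSubtypeMap _ _).toEquiv

/-- The tuples `(x₀, x, y)` counted by `dens(f₀, f, g)` in the statement, over an arbitrary index
type: the `κ`-points of `∑ xᵢ yᵢ = 0` subject to the vanishing conditions given by `f₀, f, g`. -/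
abbrev DensityPoint (f₀ : ℕ) (f g : ι → ℕ) : Type _ :=
  {p : κ × (ι → κ) × (ι → κ) //
    (f₀ = 1 → p.1 = 0) ∧ (∀ i, f i = 1 → p.2.1 i = 0) ∧
    (∀ i, g i = 1 → p.2.2 i = 0) ∧ ∑ i, p.2.1 i * p.2.2 i = 0}

/-- The quantity `dens(f₀, f, g)` of the statement, over an arbitrary index type. -/
noncomputable def localDensity (f₀ : ℕ) (f g : ι → ℕ) : ℝ :=
  (Nat.card κ : ℝ) ^ (-(2 * (Fintype.card ι : ℤ))) * Nat.card (DensityPoint κ f₀ f g)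

/-- Separates `x₀`, which does not enter the equation, from the pair `(x, y)`. -/
def densityPointEquiv (f₀ : ℕ) (f g : ι → ℕ) :
    DensityPoint κ f₀ f g ≃ {c : κ // f₀ = 1 → c = 0} ×
      {p : vanishingOn κ {i | f i = 1} × vanishingOn κ {i | g i = 1} //
        dotOnVanishing κ _ _ p.1 p.2 = 0} where
  toFun p := (⟨p.1.1, p.2.1⟩, ⟨(⟨p.1.2.1, p.2.2.1⟩, ⟨p.1.2.2, p.2.2.2.1⟩), p.2.2.2.2⟩)
  invFun p := ⟨(p.1.1, p.2.1.1.1, p.2.1.2.1), p.1.2, p.2.1.1.2, p.2.1.2.2, p.2.2⟩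

variable [Finite κ]

theorem natCard_vanishingOn (S : Set ι) :
    (Nat.card (vanishingOn κ S) : ℝ) =
      Nat.card κ ^ Fintype.card ι * (Nat.card κ : ℝ)⁻¹ ^ ∑ i, S.indicator 1 i := by
  classical
  have hq : (Nat.card κ : ℝ) ≠ 0 := Nat.cast_ne_zero.mpr Nat.card_pos.ne'
  have e : vanishingOn κ S ≃ ∀ i, {a : κ // i ∈ S → a = 0} :=
    Equiv.subtypePiEquivPi (p := fun i a ↦ i ∈ S → a = 0)
  rw [Nat.card_congr e, Nat.card_pi, Nat.cast_prod, ← card_univ, ← prod_const,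
    ← prod_pow_eq_pow_sum, ← prod_mul_distrib]
  refine prod_congr rfl fun i _ ↦ ?_
  by_cases hi : i ∈ S <;> simp [hi, hq]

theorem natCard_vanishingOn_mul_natCard_vanishingOn (S T : Set ι) :
    (Nat.card (vanishingOn κ S) * Nat.card (vanishingOn κ T) : ℝ) =
      Nat.card κ ^ (2 * Fintype.card ι) *
        (Nat.card κ : ℝ)⁻¹ ^ ∑ i, (S.indicator 1 + T.indicator 1 : ι → ℕ) i := by
  simp only [natCard_vanishingOn, Pi.add_apply, sum_add_distrib]
  ring

theorem natCard_subtype_imp_eq_zero {f₀ : ℕ} (hf₀ : f₀ ≤ 1) :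
    (Nat.card {c : κ // f₀ = 1 → c = 0} : ℝ) = Nat.card κ * (Nat.card κ : ℝ) ^ (-(f₀ : ℤ)) := by
  have hq : (Nat.card κ : ℝ) ≠ 0 := Nat.cast_ne_zero.mpr Nat.card_pos.ne'
  obtain rfl | rfl := Nat.le_one_iff_eq_zero_or_eq_one.mp hf₀ <;> simp [hq]

theorem localDensity_eq {f₀ : ℕ} (hf₀ : f₀ ≤ 1) {f g : ι → ℕ} (hf : f ≤ 1) (hg : g ≤ 1) :
    localDensity κ f₀ f g = (Nat.card κ : ℝ) ^ (-(f₀ : ℤ)) *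
      ((Nat.card κ : ℝ)⁻¹ ^ (∑ i, (f + g) i) +
        (Nat.card κ - 1) * (Nat.card κ : ℝ)⁻¹ ^ ∑ i, ((f + g) ⊔ 1) i) := by
  have hpairs := natCard_mul_natCard_orthogonal_pairs
    (dotOnVanishing κ {i | f i = 1} {i | g i = 1})
  rw [natCard_ker_dotOnVanishing] at hpairs
  have hspaces := natCard_vanishingOn_mul_natCard_vanishingOn κ {i | f i = 1} {i | g i = 1}
  have hker := natCard_vanishingOn_mul_natCard_vanishingOn κ
    ({i | f i = 1} ∪ {i | g i = 1}ᶜ) {i | g i = 1}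
  rw [indicator_eq_one_of_le_one hf, indicator_eq_one_of_le_one hg] at hspaces
  rw [indicator_union_compl_add_indicator hf hg] at hker
  have hnorm : (Nat.card κ : ℝ) ^ (-(2 * (Fintype.card ι : ℤ))) *
      (Nat.card κ : ℝ) ^ (2 * Fintype.card ι) = 1 := by
    have hq : (Nat.card κ : ℝ) ≠ 0 := Nat.cast_ne_zero.mpr Nat.card_pos.ne'
    rw [← zpow_natCast, ← zpow_add₀ hq]
    simp
  rw [localDensity, Nat.card_congr (densityPointEquiv κ f₀ f g), Nat.card_prod, Nat.cast_mul,
    natCard_subtype_imp_eq_zero κ hf₀]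
  linear_combination
    (Nat.card κ : ℝ) ^ (-(2 * (Fintype.card ι : ℤ))) * (Nat.card κ : ℝ) ^ (-(f₀ : ℤ)) *
      (hpairs + hspaces + (Nat.card κ - 1) * hker) +
    (Nat.card κ : ℝ) ^ (-(f₀ : ℤ)) * ((Nat.card κ : ℝ)⁻¹ ^ (∑ i, (f + g) i) +
      (Nat.card κ - 1) * (Nat.card κ : ℝ)⁻¹ ^ ∑ i, ((f + g) ⊔ 1) i) * hnorm

end LocalDensity

theorem stmt_15_general (κ : Type*) [Field κ] [Finite κ] {ι : Type*} [Fintype ι] [Nontrivial ι]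
    {f₀ : ℕ} (hf₀ : f₀ ≤ 1) {f g f' g' : ι → ℕ} (hf : f ≤ 1) (hg : g ≤ 1) (hf' : f' ≤ 1)
    (hg' : g' ≤ 1) :
    localFactor (Nat.card κ) f₀ f g - localFactor (Nat.card κ) f₀ f' g' =
      localDensity κ f₀ f g - localDensity κ f₀ f' g' := by
  have hq : 1 < (Nat.card κ : ℝ) := by exact_mod_cast Finite.one_lt_card
  rw [localFactor_eq hq f₀ hf hg, localFactor_eq hq f₀ hf' hg', localDensity_eq κ hf₀ hf hg,
    localDensity_eq κ hf₀ hf' hg', add_sub_add_right_eq_sub]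

/-- The key local identity `eq:a:montrer` of the paper: the difference of the local
factors `fact` at `f₁ = 0` and `f₁ = 1` equals the corresponding difference of the
local densities `dens`. -/
theorem stmt_15 (κ : Type*) [Field κ] [Fintype κ] (q : ℕ) (hq : Fintype.card κ = q)
    (n : ℕ) (hn : 2 ≤ n)
    (fact : ℕ → (Fin n → ℕ) → (Fin n → ℕ) → ℝ)
    (hfact : ∀ f₀ f g, fact f₀ f g =
      (1 - (q : ℝ)⁻¹) ^ n * (q : ℝ) ^ (-(f₀ : ℤ)) *
        ∑' d : Fin n → ℕ,
          (if ∀ i, f i + g i ≤ d i then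
            (q : ℝ) ^ (((Finset.univ.inf' ⟨⟨0, by omega⟩, Finset.mem_univ _⟩ d : ℕ) : ℤ) -
              ∑ i, (d i : ℤ))
          else 0))
    (dens : ℕ → (Fin n → ℕ) → (Fin n → ℕ) → ℝ)
    (hdens : ∀ f₀ f g, dens f₀ f g =
      (q : ℝ) ^ (-(2 * (n : ℤ))) *
        (Nat.card {p : κ × (Fin n → κ) × (Fin n → κ) //
          (f₀ = 1 → p.1 = 0) ∧ (∀ i, f i = 1 → p.2.1 i = 0) ∧
          (∀ i, g i = 1 → p.2.2 i = 0) ∧ ∑ i, p.2.1 i * p.2.2 i = 0} : ℝ))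
    (f₀ : ℕ) (hf₀ : f₀ ≤ 1) (f g : Fin n → ℕ) (hf : ∀ i, f i ≤ 1) (hg : ∀ i, g i ≤ 1) :
    fact f₀ (Function.update f ⟨0, by omega⟩ 0) g -
        fact f₀ (Function.update f ⟨0, by omega⟩ 1) g =
      dens f₀ (Function.update f ⟨0, by omega⟩ 0) g -
        dens f₀ (Function.update f ⟨0, by omega⟩ 1) g := by
  subst hq
  have : Nontrivial (Fin n) := Fin.nontrivial_iff_two_le.mpr hn
  have update_le_one {a : ℕ} (ha : a ≤ 1) : Function.update f ⟨0, by omega⟩ a ≤ 1 :=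
    update_le_iff.mpr ⟨ha, fun i _ ↦ hf i⟩
  have fact_eq (f g) : fact f₀ f g = localFactor (Fintype.card κ) f₀ f g := by
    rw [hfact, localFactor_eq_tsum_ite, Fintype.card_fin]; rfl
  have dens_eq (f g) : dens f₀ f g = localDensity κ f₀ f g := by
    rw [hdens, localDensity, Fintype.card_fin, Nat.card_eq_fintype_card (α := κ)]
  rw [fact_eq, fact_eq, dens_eq, dens_eq, ← Nat.card_eq_fintype_card]
  exact stmt_15_general κ hf₀ (update_le_one zero_le_one) hg (update_le_one le_rfl) hg
end
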